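/- arXiv:2112.06918 — 3 statements merged into one kernel-verified Lean document; each statement's English description precedes it below -/
import Mathlib

section
/- Let λ ≥ 0 and C ≥ 0 be real constants, and let q : ℕ → ℝ be a nonnegative sequence (the per-solicitation regret bounds) satisfying ∑_{l=1}^{n} q_l ≤ C·√n for every natural number n ≥ 1. Let T be a natural number with T ≥ 1, let B = ⌊T^{1/3}⌋ (the natural-number floor of the real cube root of T), and let L = ⌈T / B⌉ (the natural-number ceiling of the real quotient). Then B·∑_{l=1}^{L} q_l + λ·L ≤ (2C + 3λ)·T^{2/3}. (This is the m-regret bound O(T^{2/3}) of NeuralUCB with the feedback solicitation scheme FSS, Theorem 1 of the paper, stated at the level of the sequences used in its proof.) -/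
/-!
Solicit every `⌊y⌋` sessions, where `1 ≤ y ≤ T`. Rounding shortens the blocks by a factor of at
most `2`, so the number `L` of solicitations is at most `2T / y + 1 ≤ 3T / y`. On the other hand
`⌊y⌋ * L ≤ T + ⌊y⌋ ≤ 2T`, so `(⌊y⌋ * √L)² ≤ 2yT` and the learning regret is at most `C * √(2yT)`.
The orders `T / y` and `√(yT)` of the two costs agree exactly when `y = T^(1/3)`.
-/

section Rounding

variable {K : Type*} [Field K] [LinearOrder K] [IsStrictOrderedRing K] [FloorSemiring K]

theorem mul_natCeil_div_le_add {x b : K} (hx : 0 ≤ x) (hb : 0 < b) :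
    b * ⌈x / b⌉₊ ≤ x + b :=
  calc b * ⌈x / b⌉₊ ≤ b * (x / b + 1) := by
        gcongr
        exact (Nat.ceil_lt_add_one (by positivity)).le
    _ = x + b := by rw [mul_add, mul_div_cancel₀ x hb.ne', mul_one]

theorem natCeil_div_natFloor_le {x y : K} (hy : 1 ≤ y) (hyx : y ≤ x) :
    (⌈x / ⌊y⌋₊⌉₊ : K) ≤ 3 * (x / y) := by
  have hy₀ : 0 < y := by positivity
  have hx₀ : 0 < x := hy₀.trans_le hyx
  calc (⌈x / ⌊y⌋₊⌉₊ : K) ≤ x / ⌊y⌋₊ + 1 := (Nat.ceil_lt_add_one (by positivity)).le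
    _ ≤ x / (y / 2) + x / y := by
        gcongr
        · exact (Nat.div_two_lt_floor hy).le
        · exact (one_le_div hy₀).2 hyx
    _ = 3 * (x / y) := by field_simp; norm_num

end Rounding

theorem natFloor_mul_sqrt_natCeil_div_le {x y : ℝ} (hy : 1 ≤ y) (hyx : y ≤ x) :
    ⌊y⌋₊ * √⌈x / ⌊y⌋₊⌉₊ ≤ √(2 * y * x) := by
  have hy₀ : 0 ≤ y := by positivity
  have hx₀ : 0 ≤ x := hy₀.trans hyx
  have hfloor_pos : (0 : ℝ) < ⌊y⌋₊ := Nat.cast_pos.2 (Nat.floor_pos.2 hy)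
  have hfloor_le : (⌊y⌋₊ : ℝ) ≤ y := Nat.floor_le hy₀
  refine Real.le_sqrt_of_sq_le ?_
  calc (⌊y⌋₊ * √⌈x / ⌊y⌋₊⌉₊) ^ 2 = ⌊y⌋₊ * (⌊y⌋₊ * ⌈x / ⌊y⌋₊⌉₊) := by
        rw [mul_pow, Real.sq_sqrt (Nat.cast_nonneg _), sq, mul_assoc]
    _ ≤ y * (x + x) := by
        gcongr
        exact (mul_natCeil_div_le_add hx₀ hfloor_pos).trans (by gcongr; exact hfloor_le.trans hyx)
    _ = 2 * y * x := by ring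

/-- The bound on the m-regret over a horizon `T` when a feedback of cost `lam` is solicited every
`B` sessions: learning regret plus solicitation cost, where `q l` bounds the per-session regret in
the `l`-th block. The blocks are numbered from `1`, and the last one is counted as a full block. -/
noncomputable def mRegretBound (lam : ℝ) (q : ℕ → ℝ) (T : ℝ) (B : ℕ) : ℝ :=
  B * ∑ l ∈ Finset.Icc 1 ⌈T / B⌉₊, q l + lam * ⌈T / B⌉₊

section Regret

variable {lam C : ℝ} {q : ℕ → ℝ} {T : ℝ}

theorem mRegretBound_natFloor_le (hlam : 0 ≤ lam) (hC : 0 ≤ C)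
    (hsum : ∀ n : ℕ, 1 ≤ n → ∑ l ∈ Finset.Icc 1 n, q l ≤ C * √n)
    {y : ℝ} (hy : 1 ≤ y) (hyT : y ≤ T) :
    mRegretBound lam q T ⌊y⌋₊ ≤ C * √(2 * y * T) + 3 * lam * (T / y) := by
  have hfloor_pos : (0 : ℝ) < ⌊y⌋₊ := Nat.cast_pos.2 (Nat.floor_pos.2 hy)
  have hceil_pos : 0 < ⌈T / ⌊y⌋₊⌉₊ := Nat.ceil_pos.2 (div_pos (by linarith) hfloor_pos)
  have learning_le : ⌊y⌋₊ * ∑ l ∈ Finset.Icc 1 ⌈T / ⌊y⌋₊⌉₊, q l ≤ C * √(2 * y * T) :=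
    calc ⌊y⌋₊ * ∑ l ∈ Finset.Icc 1 ⌈T / ⌊y⌋₊⌉₊, q l ≤ ⌊y⌋₊ * (C * √⌈T / ⌊y⌋₊⌉₊) := by
          gcongr
          exact hsum _ hceil_pos
      _ = C * (⌊y⌋₊ * √⌈T / ⌊y⌋₊⌉₊) := mul_left_comm _ _ _
      _ ≤ C * √(2 * y * T) := by
          gcongr
          exact natFloor_mul_sqrt_natCeil_div_le hy hyT
  have solicitation_le : lam * ⌈T / ⌊y⌋₊⌉₊ ≤ 3 * lam * (T / y) :=
    calc lam * ⌈T / ⌊y⌋₊⌉₊ ≤ lam * (3 * (T / y)) := by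
          gcongr
          exact natCeil_div_natFloor_le hy hyT
      _ = 3 * lam * (T / y) := by ring
  exact add_le_add learning_le solicitation_le

theorem fss_m_regret_bound_general (hlam : 0 ≤ lam) (hC : 0 ≤ C)
    (hsum : ∀ n : ℕ, 1 ≤ n → ∑ l ∈ Finset.Icc 1 n, q l ≤ C * √n) (hT : 1 ≤ T) :
    mRegretBound lam q T ⌊T ^ ((1 : ℝ) / 3)⌋₊ ≤ (2 * C + 3 * lam) * T ^ ((2 : ℝ) / 3) := by
  have hT₀ : 0 < T := by positivity
  have one_le_root : 1 ≤ T ^ ((1 : ℝ) / 3) := Real.one_le_rpow hT (by norm_num)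
  have root_le : T ^ ((1 : ℝ) / 3) ≤ T := Real.rpow_le_self_of_one_le hT (by norm_num)
  have div_root : T / T ^ ((1 : ℝ) / 3) = T ^ ((2 : ℝ) / 3) := by
    rw [← Real.rpow_one_sub' hT₀.le (by norm_num)]
    norm_num
  have root_mul : T ^ ((1 : ℝ) / 3) * T = (T ^ ((2 : ℝ) / 3)) ^ 2 := by
    rw [← Real.rpow_add_one hT₀.ne', ← Real.rpow_mul_natCast hT₀.le]
    norm_num
  have sqrt_le : √(2 * T ^ ((1 : ℝ) / 3) * T) ≤ 2 * T ^ ((2 : ℝ) / 3) := by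
    rw [Real.sqrt_le_left (by positivity), mul_assoc, root_mul, mul_pow]
    gcongr
    norm_num
  calc mRegretBound lam q T ⌊T ^ ((1 : ℝ) / 3)⌋₊
      ≤ C * √(2 * T ^ ((1 : ℝ) / 3) * T) + 3 * lam * (T / T ^ ((1 : ℝ) / 3)) :=
        mRegretBound_natFloor_le hlam hC hsum one_le_root root_le
    _ ≤ C * (2 * T ^ ((2 : ℝ) / 3)) + 3 * lam * T ^ ((2 : ℝ) / 3) := by
        rw [div_root]
        gcongr
    _ = (2 * C + 3 * lam) * T ^ ((2 : ℝ) / 3) := by ring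

end Regret

/-- m-regret bound `O(T^(2/3))` of NeuralUCB with the feedback solicitation
scheme FSS (Theorem 1), at the level of the sequences used in its proof. -/
theorem fss_m_regret_bound
    (lam C : ℝ) (hlam : 0 ≤ lam) (hC : 0 ≤ C)
    (q : ℕ → ℝ) (hq : ∀ l, 0 ≤ q l)
    (hsum : ∀ n : ℕ, 1 ≤ n → ∑ l ∈ Finset.Icc 1 n, q l ≤ C * Real.sqrt n)
    (T : ℕ) (hT : 1 ≤ T)
    (B : ℕ) (hB : B = ⌊(T : ℝ) ^ ((1 : ℝ) / 3)⌋₊)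
    (L : ℕ) (hL : L = ⌈(T : ℝ) / (B : ℝ)⌉₊) :
    (B : ℝ) * ∑ l ∈ Finset.Icc 1 L, q l + lam * (L : ℝ)
      ≤ (2 * C + 3 * lam) * (T : ℝ) ^ ((2 : ℝ) / 3) := by
  subst hL hB
  exact fss_m_regret_bound_general hlam hC hsum (Nat.one_le_cast.2 hT)
end

section
/- Let α ∈ (0,1), set c = 1/(1−α), and let λ ≥ 0 and C ≥ 0 be real constants. Let q : ℕ → ℝ be a nonnegative sequence satisfying ∑_{l=1}^{n} q_l ≤ C·√n for every natural number n ≥ 1. Let T be a natural number with T ≥ 1 and let L = ⌊T^{1−α}⌋ (natural-number floor of the real power). Then there exists a constant K depending only on α, C, and λ (one may take K = C·(c·2^{c−1} + 1) + λ) such that ∑_{l=1}^{L} (⌈(l+1)^c⌉ − ⌈l^c⌉)·q_l + λ·L ≤ K·T^{z}, where z = max{(α+1)/2, 1−α}. (This is the m-regret bound of NeuralUCB with FSS-UT, Theorem 2 of the paper, stated at the level of the sequences used in its proof.) -/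
/-!
By convexity of `x ↦ x ^ c`, the `l`-th block has length at most a constant times `l ^ (c - 1)`;
since `1 ≤ l ^ (c - 1)`, the constant also absorbs the rounding error. All these powers are at most
`L ^ (c - 1)`, so a guarantee of order `L ^ s` for the sum of the `q l` becomes a learning regret of
order `L ^ (c - 1 + s)`. Finally `L ≤ T ^ (1 - α)` and
`(1 - α) * (c - 1 + s) = α + (1 - α) * s`, which is `(α + 1) / 2` for `s = 1 / 2`.
-/

/-- The length of the `l`-th block of sessions of FSS-UT, which lies between the solicitations at
sessions `⌈l ^ c⌉` and `⌈(l + 1) ^ c⌉`. The difference is taken in `ℝ`, because it weights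
real-valued regrets. -/
noncomputable def blockLength (c : ℝ) (l : ℕ) : ℝ :=
  (⌈((l : ℝ) + 1) ^ c⌉₊ : ℝ) - (⌈(l : ℝ) ^ c⌉₊ : ℝ)

lemma rpow_sub_rpow_le {c x y : ℝ} (hc : 1 ≤ c) (hx : 0 ≤ x) (hxy : x ≤ y) :
    y ^ c - x ^ c ≤ c * y ^ (c - 1) * (y - x) := by
  obtain rfl | hlt := hxy.eq_or_lt
  · simp
  · have hslope := (convexOn_rpow hc).slope_le_of_hasDerivAt hx (hx.trans hxy) hlt
      (Real.hasDerivAt_rpow_const (Or.inr hc))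
    rwa [slope_def_field, div_le_iff₀ (sub_pos.2 hlt)] at hslope

lemma add_one_rpow_sub_rpow_le {c x : ℝ} (hc : 1 ≤ c) (hx : 1 ≤ x) :
    (x + 1) ^ c - x ^ c ≤ c * 2 ^ (c - 1) * x ^ (c - 1) :=
  calc (x + 1) ^ c - x ^ c
      ≤ c * (x + 1) ^ (c - 1) := by
        simpa using rpow_sub_rpow_le hc (by linarith : 0 ≤ x) (le_add_of_nonneg_right zero_le_one)
    _ ≤ c * (2 * x) ^ (c - 1) := by
        gcongr
        linarith
    _ = c * 2 ^ (c - 1) * x ^ (c - 1) := by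
        rw [Real.mul_rpow zero_le_two (by linarith), mul_assoc]

lemma natCeil_sub_natCeil_le {R : Type*} [CommRing R] [LinearOrder R] [IsStrictOrderedRing R]
    [FloorSemiring R] {a : R} (ha : 0 ≤ a) (b : R) : (⌈a⌉₊ : R) - ⌈b⌉₊ ≤ a - b + 1 := by
  linarith [Nat.ceil_lt_add_one ha, Nat.le_ceil b]

lemma blockLength_le {c : ℝ} (hc : 1 ≤ c) {l : ℕ} (hl : 1 ≤ l) :
    blockLength c l ≤ (c * 2 ^ (c - 1) + 1) * (l : ℝ) ^ (c - 1) := by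
  have hl' : (1 : ℝ) ≤ l := mod_cast hl
  calc blockLength c l
      ≤ ((l : ℝ) + 1) ^ c - (l : ℝ) ^ c + 1 := natCeil_sub_natCeil_le (by positivity) _
    _ ≤ c * 2 ^ (c - 1) * (l : ℝ) ^ (c - 1) + (l : ℝ) ^ (c - 1) :=
        add_le_add (add_one_rpow_sub_rpow_le hc hl') (Real.one_le_rpow hl' (sub_nonneg.2 hc))
    _ = (c * 2 ^ (c - 1) + 1) * (l : ℝ) ^ (c - 1) := by ring

lemma sum_blockLength_mul_le {c : ℝ} (hc : 1 ≤ c) {q : ℕ → ℝ} {n : ℕ}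
    (hq : ∀ l ∈ Finset.Icc 1 n, 0 ≤ q l) :
    ∑ l ∈ Finset.Icc 1 n, blockLength c l * q l ≤
      (c * 2 ^ (c - 1) + 1) * (n : ℝ) ^ (c - 1) * ∑ l ∈ Finset.Icc 1 n, q l := by
  rw [Finset.mul_sum]
  refine Finset.sum_le_sum fun l hl ↦ mul_le_mul_of_nonneg_right ?_ (hq l hl)
  obtain ⟨hl₁, hln⟩ := Finset.mem_Icc.1 hl
  calc blockLength c l
      ≤ (c * 2 ^ (c - 1) + 1) * (l : ℝ) ^ (c - 1) := blockLength_le hc hl₁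
    _ ≤ (c * 2 ^ (c - 1) + 1) * (n : ℝ) ^ (c - 1) := by gcongr

lemma sum_blockLength_mul_le_rpow {c s C : ℝ} (hc : 1 ≤ c) (hs : 0 ≤ s) {q : ℕ → ℝ} {n : ℕ}
    (hq : ∀ l ∈ Finset.Icc 1 n, 0 ≤ q l) (hsum : ∑ l ∈ Finset.Icc 1 n, q l ≤ C * (n : ℝ) ^ s) :
    ∑ l ∈ Finset.Icc 1 n, blockLength c l * q l ≤
      C * (c * 2 ^ (c - 1) + 1) * (n : ℝ) ^ (c - 1 + s) :=
  calc ∑ l ∈ Finset.Icc 1 n, blockLength c l * q l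
      ≤ (c * 2 ^ (c - 1) + 1) * (n : ℝ) ^ (c - 1) * ∑ l ∈ Finset.Icc 1 n, q l :=
        sum_blockLength_mul_le hc hq
    _ ≤ (c * 2 ^ (c - 1) + 1) * (n : ℝ) ^ (c - 1) * (C * (n : ℝ) ^ s) := by gcongr
    _ = C * (c * 2 ^ (c - 1) + 1) * (n : ℝ) ^ (c - 1 + s) := by
        rw [Real.rpow_add_of_nonneg n.cast_nonneg (sub_nonneg.2 hc) hs]
        ring

lemma natFloor_rpow_rpow_le {x p : ℝ} (hx : 0 ≤ x) (hp : 0 ≤ p) (r : ℝ) :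
    (⌊x ^ r⌋₊ : ℝ) ^ p ≤ x ^ (r * p) := by
  rw [Real.rpow_mul hx]
  exact Real.rpow_le_rpow (Nat.cast_nonneg _) (Nat.floor_le (Real.rpow_nonneg hx r)) hp

theorem fss_ut_m_regret_bound_general {α c s lam C T : ℝ} (hα : α ∈ Set.Ico (0 : ℝ) 1)
    (hc : c = 1 / (1 - α)) (hs : 0 ≤ s) (hlam : 0 ≤ lam) (hC : 0 ≤ C) (hT : 1 ≤ T)
    {L : ℕ} (hL : L = ⌊T ^ (1 - α)⌋₊) {q : ℕ → ℝ} (hq : ∀ l ∈ Finset.Icc 1 L, 0 ≤ q l)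
    (hsum : ∑ l ∈ Finset.Icc 1 L, q l ≤ C * (L : ℝ) ^ s) :
    ∑ l ∈ Finset.Icc 1 L, blockLength c l * q l + lam * L ≤
      (C * (c * 2 ^ (c - 1) + 1) + lam) * T ^ max (α + (1 - α) * s) (1 - α) := by
  have hT₀ : 0 ≤ T := zero_le_one.trans hT
  have hα' : 0 < 1 - α := sub_pos.2 hα.2
  have hc₁ : 1 ≤ c := by
    rw [hc, le_div_iff₀ hα']
    linarith [hα.1]
  have hexp : (1 - α) * (c - 1 + s) = α + (1 - α) * s := by
    rw [hc]
    field_simp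
    ring
  have hlearning : ∑ l ∈ Finset.Icc 1 L, blockLength c l * q l ≤
      C * (c * 2 ^ (c - 1) + 1) * T ^ (α + (1 - α) * s) :=
    calc ∑ l ∈ Finset.Icc 1 L, blockLength c l * q l
        ≤ C * (c * 2 ^ (c - 1) + 1) * (L : ℝ) ^ (c - 1 + s) :=
          sum_blockLength_mul_le_rpow hc₁ hs hq hsum
      _ ≤ C * (c * 2 ^ (c - 1) + 1) * T ^ (α + (1 - α) * s) := by
          rw [← hexp, hL]
          gcongr
          exact natFloor_rpow_rpow_le hT₀ (add_nonneg (sub_nonneg.2 hc₁) hs) _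
  have hsolicitation : (L : ℝ) ≤ T ^ (1 - α) := hL ▸ Nat.floor_le (Real.rpow_nonneg hT₀ _)
  calc ∑ l ∈ Finset.Icc 1 L, blockLength c l * q l + lam * L
      ≤ C * (c * 2 ^ (c - 1) + 1) * T ^ (α + (1 - α) * s) + lam * T ^ (1 - α) := by gcongr
    _ ≤ C * (c * 2 ^ (c - 1) + 1) * T ^ max (α + (1 - α) * s) (1 - α) +
        lam * T ^ max (α + (1 - α) * s) (1 - α) := by
        gcongr
        · exact le_max_left _ _
        · exact le_max_right _ _
    _ = (C * (c * 2 ^ (c - 1) + 1) + lam) * T ^ max (α + (1 - α) * s) (1 - α) := by ring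

/-- m-regret bound of NeuralUCB with FSS-UT (Theorem 2), at the level of the
sequences used in its proof: with `c = 1/(1-α)` and `L = ⌊T^(1-α)⌋`, the
learning regret plus solicitation cost is at most `K · T^z` where
`z = max ((α+1)/2) (1-α)` and `K = C·(c·2^(c-1) + 1) + λ`. -/
theorem fss_ut_m_regret_bound
    (α : ℝ) (hα : α ∈ Set.Ioo (0 : ℝ) 1)
    (c : ℝ) (hc : c = 1 / (1 - α))
    (lam C : ℝ) (hlam : 0 ≤ lam) (hC : 0 ≤ C)
    (q : ℕ → ℝ) (hq : ∀ l, 0 ≤ q l)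
    (hsum : ∀ n : ℕ, 1 ≤ n → ∑ l ∈ Finset.Icc 1 n, q l ≤ C * Real.sqrt n)
    (T : ℕ) (hT : 1 ≤ T)
    (L : ℕ) (hL : L = ⌊(T : ℝ) ^ (1 - α)⌋₊)
    (z : ℝ) (hz : z = max ((α + 1) / 2) (1 - α)) :
    ∃ K : ℝ, K = C * (c * (2 : ℝ) ^ (c - 1) + 1) + lam ∧
      ∑ l ∈ Finset.Icc 1 L,
          ((⌈((l : ℝ) + 1) ^ c⌉₊ : ℝ) - (⌈(l : ℝ) ^ c⌉₊ : ℝ)) * q l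
        + lam * (L : ℝ) ≤ K * (T : ℝ) ^ z := by
  have hz' : z = max (α + (1 - α) * (1 / 2)) (1 - α) := by rw [hz]; ring_nf
  have hL₁ : 1 ≤ L := by
    rw [hL, Nat.one_le_floor_iff]
    exact Real.one_le_rpow (mod_cast hT) (sub_nonneg.2 hα.2.le)
  exact ⟨_, rfl, hz' ▸ fss_ut_m_regret_bound_general (Set.Ioo_subset_Ico_self hα) hc one_half_pos.le
    hlam hC (mod_cast hT) hL (fun l _ ↦ hq l) (Real.sqrt_eq_rpow L ▸ hsum L hL₁)⟩
end

section
/- Let α ∈ (0,1) be a real number and T ≥ 1 a natural number. Then the number of positive integers l such that ⌈l^{1/(1−α)}⌉ ≤ T (natural-number ceiling of the real power) is exactly ⌊T^{1−α}⌋ (natural-number floor of the real power). That is, under FSS-UT the number of QoE solicitations executed up to session T equals ⌊T^{1−α}⌋. -/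
theorem ceil_rpow_inv_le_iff_le_floor_rpow {p : ℝ} (hp : 0 < p) (l T : ℕ) :
    ⌈(l : ℝ) ^ p⁻¹⌉₊ ≤ T ↔ l ≤ ⌊(T : ℝ) ^ p⌋₊ := by
  rw [Nat.ceil_le, Nat.le_floor_iff (by positivity),
    Real.rpow_inv_le_iff_of_pos l.cast_nonneg T.cast_nonneg hp]

theorem fss_ut_solicitation_count_general {p : ℝ} (hp : 0 < p) (T : ℕ) :
    Nat.card {l : ℕ | 1 ≤ l ∧ ⌈(l : ℝ) ^ (1 / p)⌉₊ ≤ T} = ⌊(T : ℝ) ^ p⌋₊ := by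
  have solicitations_eq_Icc : {l : ℕ | 1 ≤ l ∧ ⌈(l : ℝ) ^ (1 / p)⌉₊ ≤ T}
      = ↑(Finset.Icc 1 ⌊(T : ℝ) ^ p⌋₊) := by
    ext l
    rw [Set.mem_ofPred_eq, Finset.mem_coe, Finset.mem_Icc, one_div,
      ceil_rpow_inv_le_iff_le_floor_rpow hp]
  rw [solicitations_eq_Icc, Nat.card_coe_set_eq, Set.ncard_coe_finset, Nat.card_Icc,
    Nat.add_sub_cancel]

/-- Under FSS-UT with parameter `α ∈ (0,1)`, where the `l`-th solicitation
happens at session `⌈l^(1/(1-α))⌉`, the number of solicitations executed up to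
session `T` is exactly `⌊T^(1-α)⌋`. -/
theorem fss_ut_solicitation_count
    (α : ℝ) (hα : α ∈ Set.Ioo (0 : ℝ) 1)
    (T : ℕ) (hT : 1 ≤ T) :
    Nat.card {l : ℕ | 1 ≤ l ∧ ⌈(l : ℝ) ^ (1 / (1 - α))⌉₊ ≤ T}
      = ⌊(T : ℝ) ^ (1 - α)⌋₊ :=
  fss_ut_solicitation_count_general (sub_pos.mpr hα.2) T
end
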